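/- arXiv:1304.7207 — 2 statements merged into one kernel-verified Lean document; each statement's English description precedes it below -/
import Mathlib

section
/- Let H₁ and H₂ be complex Hilbert spaces with dim H₁ ≥ 2 and dim H₂ ≥ 2, and let B(H₁,H₂) denote the space of bounded linear operators from H₁ to H₂, with the orthogonality relation x ⊥ y defined by x*y = 0 (x* the Hilbert-space adjoint). Let G be a uniquely 2-divisible abelian group and let f : B(H₁,H₂) → G satisfy: x*y = 0 implies f(x + y) = f(x) + f(y). Then there exist a unique additive mapping T : B(H₁,H₂) → G and a symmetric biadditive mapping B : B(H₁,H₂) × B(H₁,H₂) → G with the property that x*y = 0 implies B(x, y) = 0, such that f(x) = T(x) + B(x, x) for all x ∈ B(H₁,H₂). -/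
open ContinuousLinearMap in
lemma oa_ext {H ι E : Type*} [NormedAddCommGroup H] [InnerProductSpace ℂ H] [CompleteSpace H]
    [NormedAddCommGroup E] [InnerProductSpace ℂ E] (b : HilbertBasis ι ℂ H)
    (S T : H →L[ℂ] E) (h : ∀ i, S (b i) = T (b i)) : S = T := by
  refine ContinuousLinearMap.ext_on (s := Set.range b) ?_ ?_
  · have := b.dense_span
    rw [Submodule.dense_iff_topologicalClosure_eq_top]
    exact this
  · rintro _ ⟨i, rfl⟩
    exact h i

/-- partial isometries and projections -/
lemma oa_ops {H ι κ : Type*} [NormedAddCommGroup H] [InnerProductSpace ℂ H] [CompleteSpace H]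
    (b : HilbertBasis ι ℂ H) [Fintype κ] [DecidableEq κ] (c : ι → κ)
    (hσ : ∀ k, ∃ σ : Equiv.Perm ι, ∀ i, c i = k → c (σ i) ≠ k) :
    ∃ P : κ → H →L[ℂ] H, (∑ k, P k = 1) ∧
      (∀ j k, j ≠ k → ContinuousLinearMap.adjoint (P j) ∘L P k = 0) ∧
      (∀ k, ∃ Q : H →L[ℂ] H, ContinuousLinearMap.adjoint (P k) ∘L Q = 0 ∧
        ContinuousLinearMap.adjoint Q ∘L Q =
          ContinuousLinearMap.adjoint (P k) ∘L P k) := by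
  classical
  let K : κ → Submodule ℂ H := fun k =>
    (Submodule.span ℂ (b '' {i | c i = k})).topologicalClosure
  have : ∀ k, CompleteSpace (K k) := fun k =>
    (Submodule.isClosed_topologicalClosure _).completeSpace_coe
  let P : κ → H →L[ℂ] H := fun k => (K k).starProjection
  have hmem : ∀ i k, c i = k → b i ∈ K k := fun i k h =>
    Submodule.le_topologicalClosure _ (Submodule.subset_span ⟨i, h, rfl⟩)
  have hP1 : ∀ i k, c i = k → P k (b i) = b i := fun i k h =>
    Submodule.starProjection_eq_self_iff.2 (hmem i k h)
  have hP0 : ∀ i k, c i ≠ k → P k (b i) = 0 := by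
    intro i k h
    refine (Submodule.starProjection_apply_eq_zero_iff (K k)).2 ?_
    show b i ∈ (Submodule.topologicalClosure _)ᗮ
    rw [Submodule.orthogonal_closure]
    rw [Submodule.mem_orthogonal]
    intro u hu
    induction hu using Submodule.span_induction with
    | mem x hx =>
      obtain ⟨j, hj, rfl⟩ := hx
      have : j ≠ i := by rintro rfl; exact h hj
      exact b.orthonormal.2 this
    | zero => simp
    | add x y _ _ hx hy => rw [inner_add_left, hx, hy, add_zero]
    | smul a x _ hx => rw [inner_smul_left, hx, mul_zero]
  have hadj : ∀ k, ContinuousLinearMap.adjoint (P k) = P k := fun k =>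
    (isSelfAdjoint_starProjection (K k)).adjoint_eq
  refine ⟨P, ?_, ?_, ?_⟩
  · apply oa_ext b
    intro i
    rw [_root_.sum_apply, Finset.sum_eq_single (c i)]
    · simp [hP1 i _ rfl]
    · intro k _ hk
      exact hP0 i k hk.symm
    · simp
  · intro j k hjk
    rw [hadj]
    apply oa_ext b
    intro i
    by_cases h : c i = k
    · simp [hP1 i k h, hP0 i j (by rw [h]; exact hjk.symm)]
    · simp [hP0 i k h]
  · intro k
    obtain ⟨σ, hs⟩ := hσ k
    have ho : Orthonormal ℂ (fun i => b (σ i)) := b.orthonormal.comp σ σ.injective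
    let U : H →ₗᵢ[ℂ] H := ho.orthogonalFamily.linearIsometry.comp b.repr.toLinearIsometry
    have hU : ∀ i, U (b i) = b (σ i) := by
      intro i
      simp [U, HilbertBasis.repr_self]
    refine ⟨U.toContinuousLinearMap ∘L P k, ?_, ?_⟩
    · rw [hadj]
      apply oa_ext b
      intro i
      by_cases h : c i = k
      · simp [hP1 i k h, hU, hP0 (σ i) k (hs i h)]
      · simp [hP0 i k h]
    · ext x
      refine ext_inner_left ℂ fun y => ?_
      simp [ContinuousLinearMap.adjoint_inner_right]

universe u in
lemma oa_color {ι : Type u} [Nontrivial ι] : ∃ (κ : Type u) (_ : Fintype κ) (c : ι → κ),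
    ∀ k, ∃ σ : Equiv.Perm ι, ∀ i, c i = k → c (σ i) ≠ k := by
  classical
  rcases finite_or_infinite ι with h | h
  · have := Fintype.ofFinite ι
    refine ⟨ι, inferInstance, id, fun k => ?_⟩
    obtain ⟨j, hj⟩ := exists_ne k
    refine ⟨Equiv.swap k j, ?_⟩
    rintro i rfl
    simpa using hj
  · have : Nonempty (ι ≃ ι × ULift Bool) := by
      apply Cardinal.eq.1
      simp [Cardinal.mul_eq_left (Cardinal.aleph0_le_mk ι) (Cardinal.ofNat_lt_aleph0.le.trans (Cardinal.aleph0_le_mk ι))]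
    obtain ⟨e⟩ := this
    refine ⟨ULift Bool, inferInstance, fun i => (e i).2, fun k => ?_⟩
    refine ⟨(e.trans (Equiv.prodCongr (Equiv.refl _) (Equiv.ulift.trans (Equiv.boolNot.trans Equiv.ulift.symm)))).trans e.symm, ?_⟩
    rintro i rfl h
    have := congrArg ULift.down h
    simp at this

lemma oa_nontrivial {H ι : Type*} [NormedAddCommGroup H] [InnerProductSpace ℂ H] [CompleteSpace H]
    (b : HilbertBasis ι ℂ H) (hdim : 2 ≤ Module.rank ℂ H) : Nontrivial ι := by
  by_contra hn
  rw [not_nontrivial_iff_subsingleton] at hn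
  have := Fintype.ofFinite ι
  have hfd : Module.Finite ℂ H := b.toOrthonormalBasis.toBasis.finiteDimensional_of_finite
  have hb := Module.finrank_eq_card_basis b.toOrthonormalBasis.toBasis
  have h1 : Fintype.card ι ≤ 1 := Fintype.card_le_one_iff_subsingleton.2 hn
  rw [← Module.finrank_eq_rank] at hdim
  have h2 : 2 ≤ Module.finrank ℂ H := by exact_mod_cast hdim
  omega

section quad
variable {W G : Type*} [AddCommGroup W] [AddCommGroup G]

lemma oa_quad (hc : ∀ a : G, a + a = 0 → a = 0) (q : W → G) (hev : ∀ x, q (-x) = q x)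
    (hq : ∀ x y, q (x + y) + q (x - y) = q x + q x + (q y + q y)) (x y z : W) :
    q (x + y + z) = q (x + y) + q (x + z) + q (y + z) - q x - q y - q z := by
  let C : W → W → W → G := fun x y z =>
    q (x + y + z) - (q (x + y) + q (x + z) + q (y + z) - q x - q y - q z)
  have h3 : ∀ x y z, C x y (-z) = - C x y z := by
    intro x y z
    have a1 := hq (x + y) z
    have a2 := hq x z
    have a3 := hq y z
    simp only [C, ← sub_eq_add_neg, hev]
    grind
  have s1 : ∀ x y z, C x y z = C y z x := by
    intro x y z
    simp only [C]
    rw [show y + z + x = x + y + z by abel, add_comm z x, add_comm y x]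
    abel
  have hneg : ∀ x y z, C (-x) (-y) (-z) = C x y z := by
    intro x y z
    simp only [C, ← neg_add, hev]
  have h := hneg x y z
  rw [h3, s1, h3, s1, h3, s1, neg_neg] at h
  have := hc (C x y z) (by nth_rewrite 1 [← h]; exact neg_add_cancel _)
  exact sub_eq_zero.1 this

lemma oa_key (hc : ∀ a : G, a + a = 0 → a = 0) (f g : W → G) (f0 : f 0 = 0) (g0 : g 0 = 0)
    (hd : ∀ x : W, ∃ z, x = z + z)
    (h : ∀ x y, f (x - y) + g (x + y) = f x + g x + (f (-y) + g y)) :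
    (∀ x y, f (x + y) - f (-(x + y)) = f x - f (-x) + (f y - f (-y))) ∧
    (∀ x y, (f (x + y) + f (-(x + y))) + (f (x - y) + f (-(x - y))) =
      (f x + f (-x)) + (f x + f (-x)) + ((f y + f (-y)) + (f y + f (-y)))) := by
  have key : ∀ x y, f (x - y) - f (-(x - y)) = f x - f (-x) + (f (-y) - f y) := by
    intro x y
    have h1 := h x y
    have h2 := h (-x) (-y)
    have h3 := h y x
    have h4 := h (-y) (-x)
    rw [show -x - -y = -(x - y) by abel, show -x + -y = -(x + y) by abel, neg_neg] at h2
    rw [show y - x = -(x - y) by abel, show y + x = x + y by abel] at h3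
    rw [show -y - -x = x - y by abel, show -y + -x = -(x + y) by abel, neg_neg] at h4
    rw [← sub_eq_zero]
    apply hc
    grind
  have ev : ∀ x, g x + g (-x) = f x + f (-x) := by
    intro x
    obtain ⟨z, rfl⟩ := hd x
    have h1 := h z z
    have h2 := h (-z) (-z)
    have h3 := h z (-z)
    have h4 := h (-z) z
    simp only [sub_neg_eq_add, neg_neg, sub_self, neg_add_cancel, add_neg_cancel, f0, g0,
      ← sub_eq_add_neg] at h1 h2 h3 h4
    rw [show -z - z = -(z + z) by abel] at h2 h4
    grind
  refine ⟨fun x y => ?_, fun x y => ?_⟩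
  · have := key x (-y)
    simpa using this
  · have h1 := h x y
    have h2 := h (-x) (-y)
    rw [show -x - -y = -(x - y) by abel, show -x + -y = -(x + y) by abel, neg_neg] at h2
    have e1 := ev (x + y)
    have e2 := ev x
    have e3 := ev y
    grind
end quad

open ContinuousLinearMap in
/-- Proposition 6.1, first part.
Let `H₁, H₂` be complex Hilbert spaces of dimension at least 2, with the orthogonality
`x ⊥ y ⟺ x* ⬝ y = 0` on `B(H₁,H₂)`.  If `G` is a uniquely 2-divisible abelian group and
`f : B(H₁,H₂) → G` is orthogonally additive, then there are a unique additive
`T : B(H₁,H₂) → G` and a symmetric biadditive orthogonality preserving `B` with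
`f(x) = T(x) + B(x,x)` for all `x`. -/
theorem orthogonally_additive_representation_boundedOperators
    {H₁ H₂ : Type*}
    [NormedAddCommGroup H₁] [InnerProductSpace ℂ H₁] [CompleteSpace H₁]
    [NormedAddCommGroup H₂] [InnerProductSpace ℂ H₂] [CompleteSpace H₂]
    (hdim₁ : 2 ≤ Module.rank ℂ H₁) (hdim₂ : 2 ≤ Module.rank ℂ H₂)
    {G : Type*} [AddCommGroup G]
    (hG2 : ∀ g : G, ∃! h : G, h + h = g)
    (f : (H₁ →L[ℂ] H₂) → G)
    (hf : ∀ x y : H₁ →L[ℂ] H₂, adjoint x ∘L y = 0 → f (x + y) = f x + f y) :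
    ∃ (T : (H₁ →L[ℂ] H₂) → G) (B : (H₁ →L[ℂ] H₂) → (H₁ →L[ℂ] H₂) → G),
      ((∀ x y, T (x + y) = T x + T y) ∧
       (∀ x y, B x y = B y x) ∧
       (∀ x y z, B (x + y) z = B x z + B y z) ∧
       (∀ x y z, B x (y + z) = B x y + B x z) ∧
       (∀ x y, adjoint x ∘L y = 0 → B x y = 0) ∧
       (∀ x, f x = T x + B x x)) ∧
      (∀ (T' : (H₁ →L[ℂ] H₂) → G) (B' : (H₁ →L[ℂ] H₂) → (H₁ →L[ℂ] H₂) → G),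
        ((∀ x y, T' (x + y) = T' x + T' y) ∧
         (∀ x y, B' x y = B' y x) ∧
         (∀ x y z, B' (x + y) z = B' x z + B' y z) ∧
         (∀ x y z, B' x (y + z) = B' x y + B' x z) ∧
         (∀ x y, adjoint x ∘L y = 0 → B' x y = 0) ∧
         (∀ x, f x = T' x + B' x x)) → T' = T) := by
  classical
  have hc : ∀ a : G, a + a = 0 → a = 0 := fun a ha =>
    (hG2 0).unique ha (add_zero 0)
  choose h hh huniq using hG2
  have hadd : ∀ a b, h (a + b) = h a + h b := by
    intro a b
    refine (huniq (a + b) (h a + h b) ?_).symm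
    change h a + h b + (h a + h b) = a + b
    rw [add_add_add_comm]
    exact congrArg₂ (· + ·) (hh a) (hh b)
  have hh' : ∀ a, h a + h a = a := hh
  have f0 : f 0 = 0 := by
    have := hf 0 0 (by simp)
    simpa using this
  obtain ⟨w, b, -⟩ := exists_hilbertBasis ℂ H₂
  have hnt : Nontrivial w := oa_nontrivial b hdim₂
  obtain ⟨κ, hκ, c, hcol⟩ := oa_color (ι := w)
  obtain ⟨P, hP1, hP2, hP3⟩ := oa_ops b c hcol
  have orth : ∀ (R Q : H₂ →L[ℂ] H₂), adjoint R ∘L Q = 0 → ∀ x y : H₁ →L[ℂ] H₂,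
      f (R ∘L x + Q ∘L y) = f (R ∘L x) + f (Q ∘L y) := by
    intro R Q hRQ x y
    apply hf
    rw [adjoint_comp, comp_assoc, ← comp_assoc (adjoint R), hRQ]
    simp
  have hsum : ∀ x, f x = ∑ k, f (P k ∘L x) := by
    intro x
    have : ∀ s : Finset κ, f (∑ k ∈ s, P k ∘L x) = ∑ k ∈ s, f (P k ∘L x) := by
      intro s
      induction s using Finset.induction_on with
      | empty => simpa using f0
      | insert a s ha ih =>
        rw [Finset.sum_insert ha, Finset.sum_insert ha, hf, ih]
        ext v
        simp only [comp_apply, zero_apply, _root_.sum_apply, map_sum]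
        refine Finset.sum_eq_zero fun k hk => ?_
        have hak : a ≠ k := by rintro rfl; exact ha hk
        have := congrArg (fun S => adjoint x (S (x v))) (hP2 a k hak)
        simpa [adjoint_comp] using this
    rw [← this]
    congr 1
    have h2 := congrArg (fun S : H₂ →L[ℂ] H₂ => S ∘L x) hP1
    ext v
    have h3 := congrArg (fun S : H₁ →L[ℂ] H₂ => S v) h2
    simpa [_root_.sum_apply] using h3.symm
  choose Q hQ1 hQ2 using hP3
  have hgood := fun k =>
    oa_key (W := H₁ →L[ℂ] H₂) hc (fun x => f (P k ∘L x)) (fun x => f (Q k ∘L x))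
      (by simpa using f0) (by simpa using f0)
      (fun x => ⟨(2⁻¹ : ℂ) • x, by rw [← add_smul]; norm_num⟩)
      (by
        intro x y
        have hQ1' : adjoint (Q k) ∘L P k = 0 := by
          have := congrArg adjoint (hQ1 k)
          simpa [adjoint_comp] using this
        rw [← orth _ _ (hQ1 k), ← orth _ _ (hQ1 k), ← orth _ _ (hQ1 k), ← hf]
        · congr 1
          ext v
          simp
          abel
        · have e1 := fun v => congrArg (fun S : H₂ →L[ℂ] H₂ => S v) (hQ1 k)
          have e2 := fun v => congrArg (fun S : H₂ →L[ℂ] H₂ => S v) hQ1'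
          have e3 := fun v => congrArg (fun S : H₂ →L[ℂ] H₂ => S v) (hQ2 k)
          simp only [comp_apply, zero_apply] at e1 e2 e3
          ext v
          simp [adjoint_comp, e1, e2, e3])
  have hodd : ∀ x y, f (x + y) - f (-(x + y)) = f x - f (-x) + (f y - f (-y)) := by
    intro x y
    simp only [hsum (x + y), hsum (-(x + y)), hsum x, hsum (-x), hsum y, hsum (-y),
      ← Finset.sum_sub_distrib, ← Finset.sum_add_distrib]
    exact Finset.sum_congr rfl fun k _ => (hgood k).1 x y
  have heven : ∀ x y, (f (x + y) + f (-(x + y))) + (f (x - y) + f (-(x - y))) =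
      (f x + f (-x)) + (f x + f (-x)) + ((f y + f (-y)) + (f y + f (-y))) := by
    intro x y
    simp only [hsum (x + y), hsum (-(x + y)), hsum (x - y), hsum (-(x - y)), hsum x, hsum (-x),
      hsum y, hsum (-y), ← Finset.sum_add_distrib]
    exact Finset.sum_congr rfl fun k _ => (hgood k).2 x y
  let q : (H₁ →L[ℂ] H₂) → G := fun x => h (f x + f (-x))
  have hqev : ∀ x, q (-x) = q x := fun x => by simp only [q, neg_neg, add_comm]
  have hquad := oa_quad hc q hqev (by
    intro x y
    simp only [q, ← hadd, heven])
  let B : (H₁ →L[ℂ] H₂) → (H₁ →L[ℂ] H₂) → G := fun x y => h (q (x + y) - q x - q y)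
  have hsymm : ∀ x y, B x y = B y x := by
    intro x y
    simp only [B]
    rw [add_comm x y]
    congr 1
    abel
  have hBadd : ∀ x y z, B (x + y) z = B x z + B y z := by
    intro x y z
    simp only [B, ← hadd]
    rw [hquad]
    congr 1
    abel
  have q0 : q 0 = 0 := by
    simp only [q, neg_zero, f0, add_zero]
    exact (huniq 0 0 (add_zero 0)).symm
  have hqq : ∀ x, h (q (x + x) - q x - q x) = q x := by
    intro x
    refine (huniq _ (q x) ?_).symm
    have e := heven x x
    have e1 : q (x + x) + q (x - x) = q x + q x + (q x + q x) := by
      simp only [q, ← hadd, heven]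
    rw [sub_self, q0, add_zero] at e1
    change q x + q x = _
    rw [e1]
    abel
  refine ⟨fun x => h (f x - f (-x)), B, ⟨?_, hsymm, hBadd, ?_, ?_, ?_⟩, ?_⟩
  · intro x y
    simp only [← hadd, hodd]
  · intro x y z
    rw [hsymm, hBadd, hsymm y, hsymm z]
  · intro x y hxy
    have e1 := hf x y hxy
    have e2 := hf (-x) (-y) (by simpa using hxy)
    have : q (x + y) = q x + q y := by
      simp only [q, ← hadd, e1, neg_add, e2]
      congr 1
      abel
    simp only [B, this]
    refine (huniq _ 0 ?_).symm
    change (0 : G) + 0 = _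
    abel
  · intro x
    simp only [B, hqq]
    simp only [q, ← hadd]
    refine huniq _ _ ?_
    change f x + f x = _
    abel
  · rintro T' B' ⟨hT, -, hB1, hB2, -, hfe⟩
    funext x
    refine huniq _ _ ?_
    change T' x + T' x = _
    have t0 : T' 0 = 0 := by simpa using hT 0 0
    have t1 := hT x (-x)
    have b0 : ∀ z, B' 0 z = 0 := fun z => by simpa using hB1 0 0 z
    have b0' : ∀ z, B' z 0 = 0 := fun z => by simpa using hB2 z 0 0
    have t2 := hB1 x (-x) x
    have t3 := hB2 (-x) x (-x)
    rw [add_neg_cancel] at t1 t2 t3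
    rw [t0] at t1
    rw [b0] at t2
    rw [b0'] at t3
    rw [hfe x, hfe (-x)]
    grind
end

section
/- Let H be a complex Hilbert space with dim H ≥ 2 and let B(H) denote the C*-algebra of bounded linear operators on H. Let G be a complex Banach space and let f : B(H) → G be a continuous mapping such that x*y = 0 implies f(x + y) = f(x) + f(y). Then there exist a continuous additive mapping T : B(H) → G and a unique continuous linear mapping Φ : B(H) → G such that f(x) = T(x) + Φ(x*x) for all x ∈ B(H). -/
set_option linter.unusedSectionVars false
section alg
variable {A : Type*} [CStarAlgebra A] {G : Type*} [NormedAddCommGroup G] [NormedSpace ℂ G]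

/-- orthogonal additivity -/
def OA (f : A → G) : Prop := ∀ x y : A, star x * y = 0 → f (x + y) = f x + f y

/-- a projection which is subequivalent to its complement -/
def Gd (p : A) : Prop := star p = p ∧ p * p = p ∧ ∃ u : A, star u * u = p ∧ p * u = 0

theorem OA.zero {f : A → G} (h : OA f) : f 0 = 0 := by
  have := h 0 0 (by simp)
  simpa using this

theorem key_perp {p u : A} (hp : star p = p) (hu : star u * u = p)
    (hpu : p * u = 0) (hpp : p * p = p) (c : ℂ) (hc : star c * c = 1) (x y : A) :
    star (p * x + c • (u * (p * x))) * (p * y - c • (u * (p * y))) = 0 := by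
  have hup : star u * p = 0 := by
    have := congrArg star hpu
    simpa [hp] using this
  have e1 : star x * p * (p * y) = star x * p * y := by
    rw [← mul_assoc, mul_assoc (star x), hpp]
  have e2 : star x * p * (u * (p * y)) = 0 := by
    rw [← mul_assoc, mul_assoc (star x), hpu]; simp
  have e3 : star x * p * star u * (p * y) = 0 := by
    rw [← mul_assoc, mul_assoc _ (star u), hup]; simp
  have e4 : star x * p * star u * (u * (p * y)) = star x * p * y := by
    have : star x * p * star u * (u * (p * y)) = star x * p * (star u * u) * (p * y) := by
      noncomm_ring
    rw [this, hu, mul_assoc (star x), hpp, e1]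
  simp only [star_add, star_mul, star_smul, hp, add_mul, mul_sub, smul_mul_assoc, mul_smul_comm,
    smul_smul, e1, e2, e3, e4, ← mul_assoc (star x) p]
  simp only [smul_zero, zero_add, add_zero, smul_smul, mul_comm c, hc, one_smul, sub_self]

/-- the basic functional identity -/
theorem key_id {f : A → G} (h : OA f) {p u : A} (hp : star p = p) (hu : star u * u = p)
    (hpu : p * u = 0) (hpp : p * p = p) (c : ℂ) (hc : star c * c = 1) (x y : A) :
    f (p * (x + y)) + f (c • (u * (p * (x - y)))) =
      f (p * x) + f (p * y) + f (c • (u * (p * x))) + f (- (c • (u * (p * y)))) := by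
  have hz : ∀ a b : A, star (p * a) * (c • (u * (p * b))) = 0 := by
    intro a b
    rw [mul_smul_comm, star_mul, hp, ← mul_assoc, mul_assoc (star a), hpu]; simp
  have h1 := h _ _ (key_perp hp hu hpu hpp c hc x y)
  rw [h _ _ (hz x x), sub_eq_add_neg, h (p * y) _ (by rw [mul_neg, hz, neg_zero])] at h1
  have h2 := h _ _ (hz (x + y) (x - y))
  rw [← h2]
  have : p * (x + y) + c • (u * (p * (x - y))) =
    p * x + c • (u * (p * x)) + (p * y + -(c • (u * (p * y)))) := by
    simp only [mul_add, mul_sub, smul_sub]; abel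
  rw [this, h1]; abel

theorem two_cancel {a b : G} (h : a + a = b + b) : a = b := by
  have : (2 : ℂ) • a = (2 : ℂ) • b := by simpa [two_smul] using h
  exact smul_right_injective G (two_ne_zero (α := ℂ)) this

theorem odd_block {f : A → G} (h : OA f) (ho : ∀ x, f (-x) = - f x) {p : A} (hg : Gd p)
    (x y : A) : f (p * (x + y)) = f (p * x) + f (p * y) := by
  obtain ⟨hp, hpp, u, hu, hpu⟩ := hg
  have h1 := key_id h hp hu hpu hpp 1 (by simp) x y
  have h2 := key_id h hp hu hpu hpp 1 (by simp) y x
  have e : f ((1:ℂ) • (u * (p * (y - x)))) = - f ((1:ℂ) • (u * (p * (x - y)))) := by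
    rw [← ho]; congr 1; simp only [mul_sub, smul_sub]; abel
  rw [e, add_comm y x] at h2
  simp only [ho] at h1 h2
  apply two_cancel
  linear_combination (norm := module) h1 + h2

theorem even_block_swap {f : A → G} (h : OA f) (he : ∀ x, f (-x) = f x) {p u : A}
    (hp : star p = p) (hu : star u * u = p)
    (hpu : p * u = 0) (hpp : p * p = p) (c : ℂ) (hc : star c * c = 1) (x : A) :
    f (c • (u * (p * x))) = f (p * x) := by
  obtain ⟨y, rfl⟩ : ∃ y, x = y + y := ⟨(2⁻¹ : ℂ) • x, by rw [← add_smul]; norm_num⟩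
  have h1 := key_id h hp hu hpu hpp c hc y y
  have h2 := key_id h hp hu hpu hpp c hc y (-y)
  simp only [sub_self, mul_zero, smul_zero, h.zero, add_neg_cancel, sub_neg_eq_add, mul_neg,
    smul_neg, he] at h1 h2
  linear_combination (norm := module) h2 - h1

theorem even_block {f : A → G} (h : OA f) (he : ∀ x, f (-x) = f x) {p : A} (hg : Gd p)
    (x y : A) : f (p * (x + y)) + f (p * (x - y)) =
      f (p * x) + f (p * x) + (f (p * y) + f (p * y)) := by
  obtain ⟨hp, hpp, u, hu, hpu⟩ := hg
  have h1 := key_id h hp hu hpu hpp 1 (by simp) x y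
  simp only [he, even_block_swap h he hp hu hpu hpp 1 (by simp)] at h1
  rw [h1]; abel

theorem even_block_I {f : A → G} (h : OA f) (he : ∀ x, f (-x) = f x) {p : A} (hg : Gd p)
    (x : A) : f (p * (Complex.I • x)) = f (p * x) := by
  obtain ⟨hp, hpp, u, hu, hpu⟩ := hg
  have h1 := even_block_swap h he hp hu hpu hpp 1 (by simp) (Complex.I • x)
  have h2 := even_block_swap h he hp hu hpu hpp Complex.I (by simp) x
  rw [← h1, ← h2]; simp [mul_smul_comm]

theorem split3 {f : A → G} (h : OA f) {p q r : A} (hp : Gd p) (hq : Gd q)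
    (hs : p + q + r = 1) (hpq : p * q = 0) (hpr : p * r = 0) (hqr : q * r = 0) (x : A) :
    f x = f (p * x) + f (q * x) + f (r * x) := by
  have e : x = p * x + (q * x + r * x) := by
    rw [← add_mul, ← add_mul, ← add_assoc, hs, one_mul]
  conv_lhs => rw [e]
  rw [h, h, add_assoc]
  · rw [star_mul, hq.1, ← mul_assoc, mul_assoc (star x), hqr]; simp
  · have e2 : star (p * x) * (q * x + r * x) = star x * (p * q) * x + star x * (p * r) * x := by
      rw [star_mul, hp.1]; noncomm_ring
    rw [e2, hpq, hpr]; simp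

/-- off-diagonal operators can be moved -/
theorem offdiag {S : A → A → G} (hl : ∀ x y z, S (x + y) z = S x z + S y z)
    (hr : ∀ x y z, S x (y + z) = S x y + S x z) (h0 : ∀ x y, star x * y = 0 → S x y = 0)
    {p : A} (hp : star p = p) (hpp : p * p = p) (a x y : A) :
    S x (p * a * (1 - p) * y) = S (star (p * a * (1 - p)) * x) y := by
  set w := p * a * (1 - p) with hw
  have hp1 : (1 - p) * p = 0 := by rw [sub_mul, one_mul, hpp, sub_self]
  have hp2 : p * (1 - p) = 0 := by rw [mul_sub, mul_one, hpp, sub_self]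
  have hpw : p * w = w := by rw [hw, ← mul_assoc, ← mul_assoc, hpp]
  have hwp : w * p = 0 := by rw [hw, mul_assoc, hp1, mul_zero]
  have hww : w * w = 0 := by
    calc w * w = w * (p * w) := by rw [hpw]
      _ = 0 := by rw [← mul_assoc, hwp, zero_mul]
  have hw1 : w * (1 - p) = w := by rw [mul_sub, mul_one, hwp, sub_zero]
  have hw2 : (1 - p) * w = 0 := by rw [sub_mul, one_mul, hpw, sub_self]
  have ex : x = p * x + (1 - p) * x := by rw [← add_mul]; simp
  have ey : y = p * y + (1 - p) * y := by rw [← add_mul]; simp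
  have hs1 : star (1 - p) = 1 - p := by simp [hp]
  have z1 : S (p * x) ((1 - p) * y) = 0 := h0 _ _ (by
    rw [star_mul, hp, ← mul_assoc, mul_assoc (star x), hp2]; simp)
  have z2 : S ((1 - p) * x) (w * y) = 0 := h0 _ _ (by
    rw [star_mul, hs1, ← mul_assoc, mul_assoc (star x), hw2]; simp)
  have z3 : S (star w * x) (p * y) = 0 := h0 _ _ (by
    rw [star_mul, star_star, ← mul_assoc, mul_assoc (star x), hwp]; simp)
  have z4 : S (-(star w * x)) (w * y) = 0 := h0 _ _ (by
    rw [star_neg, star_mul, star_star, neg_mul, ← mul_assoc, mul_assoc (star x), hww]; simp)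
  have z5 : S (p * x + -(star w * x)) ((1 - p) * y + w * y) = 0 := h0 _ _ (by
    have : star (p * x + -(star w * x)) * ((1 - p) * y + w * y) =
      star x * (p * (1 - p) + p * w - w * (1 - p) - w * w) * y := by
      simp only [star_add, star_neg, star_mul, star_star, hp]; noncomm_ring
    rw [this, hp2, hpw, hw1, hww]; simp)
  have z6 : S (-(star w * x)) ((1 - p) * y) = - S (star w * x) ((1 - p) * y) := by
    have a0 : S 0 ((1 - p) * y) = 0 := h0 _ _ (by simp)
    have := hl (-(star w * x)) (star w * x) ((1 - p) * y)
    rw [neg_add_cancel, a0] at this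
    exact eq_neg_of_add_eq_zero_left this.symm
  rw [hl, hr, hr, z1, z4, z6] at z5
  have L : S x (w * y) = S (p * x) (w * y) := by
    conv_lhs => rw [ex]
    rw [hl, z2, add_zero]
  have R : S (star w * x) y = S (star w * x) ((1 - p) * y) := by
    conv_lhs => rw [ey]
    rw [hr, z3, zero_add]
  rw [L, R]
  linear_combination (norm := module) z5

theorem good_adj {S : A → A → G} (hl : ∀ x y z, S (x + y) z = S x z + S y z)
    (hr : ∀ x y z, S x (y + z) = S x y + S x z) (h0 : ∀ x y, star x * y = 0 → S x y = 0)
    {p : A} (hg : Gd p) (z x y : A) :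
    S x (p * z * y) = S (star (p * z) * x) y := by
  obtain ⟨hp, hpp, u, hu, hpu⟩ := hg
  have hup : star u * p = 0 := by
    have := congrArg star hpu
    simpa [hp] using this
  have hs1 : star (1 - p) = 1 - p := by simp [hp]
  have hii : (1 - p) * (1 - p) = 1 - p := by simp [mul_sub, sub_mul, hpp]
  have e : p * z = p * z * (1 - p) + (p * (z * star u) * (1 - p)) * ((1 - p) * u * (1 - (1 - p))) := by
    have e1 : p * (z * star u) * (1 - p) = p * z * star u := by
      rw [mul_sub, mul_one, mul_assoc p _ p, mul_assoc z, hup]; simp [mul_assoc]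
    have e2 : (1 - p) * u * (1 - (1 - p)) = u * p := by
      rw [sub_mul 1 p u, hpu]; simp
    rw [e1, e2]
    have : p * z * star u * (u * p) = p * z * ((star u * u) * p) := by noncomm_ring
    rw [this, hu, hpp, mul_sub]; simp
  have o1 := fun a => offdiag hl hr h0 hp hpp a
  have o2 := fun a => offdiag hl hr h0 hs1 hii a
  rw [e, add_mul, hr, star_add, add_mul, hl, o1, star_mul]
  congr 1
  rw [mul_assoc (p * (z * star u) * (1 - p)), o1, o2, star_mul (p * (z * star u) * (1 - p)),
    mul_assoc (star ((1 - p) * u * (1 - (1 - p))))]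

theorem main_alg (f : A → G) (hfc : Continuous f) (h : OA f) {p q r : A} (hp : Gd p)
    (hq : Gd q) (hr : Gd r) (hs : p + q + r = 1) (hpq : p * q = 0) (hpr : p * r = 0)
    (hqr : q * r = 0) :
    ∃ T : A → G, Continuous T ∧ (∀ x y : A, T (x + y) = T x + T y) ∧
      ∃! Φ : A →L[ℂ] G, ∀ x : A, f x = T x + Φ (star x * x) := by
  have hn : OA (fun x => f (-x)) := fun x y hxy => by
    simp only [neg_add]
    exact h _ _ (by simpa using hxy)
  set T : A → G := fun x => (2⁻¹ : ℂ) • (f x - f (-x)) with hT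
  set Q : A → G := fun x => (2⁻¹ : ℂ) • (f x + f (-x)) with hQ
  have hTo : OA T := fun x y hxy => by
    have a := h x y hxy
    have b := hn x y hxy
    simp only at b
    simp only [hT, a, b, ← smul_add]; congr 1; abel
  have hQo : OA Q := fun x y hxy => by
    have a := h x y hxy
    have b := hn x y hxy
    simp only at b
    simp only [hQ, a, b, ← smul_add]; congr 1; abel
  have hTodd : ∀ x, T (-x) = - T x := fun x => by
    simp only [hT, neg_neg, ← smul_neg, neg_sub]
  have hQe : ∀ x, Q (-x) = Q x := fun x => by
    simp only [hQ, neg_neg, add_comm]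
  have hTc : Continuous T := by fun_prop
  have hQc : Continuous Q := by fun_prop
  have sT := split3 hTo hp hq hs hpq hpr hqr
  have sQ := split3 hQo hp hq hs hpq hpr hqr
  have hTadd : ∀ x y : A, T (x + y) = T x + T y := fun x y => by
    rw [sT (x + y), sT x, sT y, odd_block hTo hTodd hp, odd_block hTo hTodd hq,
      odd_block hTo hTodd hr]; abel
  have hP : ∀ x y : A, Q (x + y) + Q (x - y) = Q x + Q x + (Q y + Q y) := fun x y => by
    have a := even_block hQo hQe hp x y
    have b := even_block hQo hQe hq x y
    have c := even_block hQo hQe hr x y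
    rw [sQ (x + y), sQ (x - y), sQ x, sQ y]
    linear_combination (norm := module) a + b + c
  have hI : ∀ x : A, Q (Complex.I • x) = Q x := fun x => by
    rw [sQ (Complex.I • x), sQ x, even_block_I hQo hQe hp, even_block_I hQo hQe hq,
      even_block_I hQo hQe hr]
  clear_value T Q
  -- the biadditive form
  set B : A → A → G := fun x y => (4⁻¹ : ℂ) • (Q (x + y) - Q (x - y)) with hB
  have Q0 : Q 0 = 0 := hQo.zero
  have Bsymm : ∀ x y, B x y = B y x := fun x y => by
    simp only [hB]; rw [add_comm x y, ← neg_sub y x, hQe]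
  have BJ : ∀ x x' y, B (x + x') y + B (x - x') y = B x y + B x y := fun x x' y => by
    have a := hP (x + y) x'
    have b := hP (x - y) x'
    simp only [hB, ← smul_add]; congr 1
    rw [show x + x' + y = x + y + x' by abel, show x - x' + y = x + y - x' by abel,
      show x + x' - y = x - y + x' by abel, show x - x' - y = x - y - x' by abel]
    linear_combination (norm := module) a - b
  have B0 : ∀ y, B 0 y = 0 := fun y => by simp [hB, hQe]
  have B2 : ∀ x y, B (x + x) y = B x y + B x y := fun x y => by
    have := BJ x x y
    rwa [sub_self, B0, add_zero] at this
  have Bl : ∀ x x' y, B (x + x') y = B x y + B x' y := fun x x' y => by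
    obtain ⟨a, ha⟩ : ∃ a, x + x' = a + a := ⟨(2⁻¹ : ℂ) • (x + x'), by rw [← add_smul]; norm_num⟩
    have e := BJ a (x - a) y
    rw [ha, B2, ← e]
    congr 2
    · abel
    · rw [sub_sub_eq_add_sub, ← ha]; abel
  have Br : ∀ x y y', B x (y + y') = B x y + B x y' := fun x y y' => by
    rw [Bsymm, Bl, Bsymm y, Bsymm y']
  have Bz : ∀ x y, star x * y = 0 → B x y = 0 := fun x y hxy => by
    simp only [hB]
    rw [hQo x y hxy, sub_eq_add_neg x, hQo x (-y) (by simpa using hxy), hQe, sub_self, smul_zero]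
  have BI : ∀ x y, B (Complex.I • x) (Complex.I • y) = B x y := fun x y => by
    simp only [hB, ← smul_add, ← smul_sub, hI]
  have Bn : ∀ x y, B x (-y) = - B x y := fun x y => by
    simp only [hB, ← smul_neg, neg_sub, sub_neg_eq_add, ← sub_eq_add_neg]
  have BII : ∀ x y, B x (Complex.I • Complex.I • y) = - B x y := fun x y => by
    rw [smul_smul, Complex.I_mul_I, neg_one_smul, Bn]
  have Bxx : ∀ x, B x x = Q x := fun x => by
    have := hP x x
    simp only [hB]
    rw [sub_self, Q0] at *
    rw [add_zero] at this
    rw [this, sub_zero]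
    rw [show Q x + Q x + (Q x + Q x) = (4 : ℂ) • Q x by
      rw [show (4:ℂ) = 1 + 1 + (1 + 1) by norm_num]; simp only [add_smul, one_smul], smul_smul]
    norm_num
  have BxI : ∀ x, B x (Complex.I • x) = 0 := fun x => by
    have a := BI x (Complex.I • x)
    rw [BII, Bsymm] at a
    have : B x (Complex.I • x) + B x (Complex.I • x) = 0 + 0 := by
      nth_rewrite 1 [← a]; simp
    exact two_cancel this
  have Bc : ∀ x, Continuous (B x) := fun x => by
    simp only [hB]; fun_prop
  clear_value B
  set S : A → A → G := fun x y => B x y - Complex.I • B x (Complex.I • y) with hS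
  have Sl : ∀ x y z, S (x + y) z = S x z + S y z := fun x y z => by
    simp only [hS, Bl, smul_add]; abel
  have Sr : ∀ x y z, S x (y + z) = S x y + S x z := fun x y z => by
    simp only [hS, Br, smul_add]; abel
  have Sz : ∀ x y, star x * y = 0 → S x y = 0 := fun x y hxy => by
    simp only [hS]
    rw [Bz x y hxy, Bz x _ (by rw [mul_smul_comm, hxy, smul_zero])]; simp
  have SI : ∀ x y, S x (Complex.I • y) = Complex.I • S x y := fun x y => by
    simp only [hS, BII, smul_sub, smul_neg]
    rw [smul_smul, Complex.I_mul_I, neg_one_smul]; abel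
  have Sadj : ∀ z x y, S x (z * y) = S (star z * x) y := fun z x y => by
    have e : z = p * z + q * z + r * z := by rw [← add_mul, ← add_mul, hs, one_mul]
    rw [e]
    simp only [add_mul, Sr, Sl, star_add]
    rw [good_adj Sl Sr Sz hp, good_adj Sl Sr Sz hq, good_adj Sl Sr Sz hr]
  have Sc : Continuous (S 1) := by
    have := Bc 1
    simp only [hS]; fun_prop
  have SQ : ∀ x, Q x = S 1 (star x * x) := fun x => by
    rw [Sadj, star_star, mul_one]; simp only [hS, Bxx, BxI]; simp
  let ψ : A →+ G := AddMonoidHom.mk' (S 1) (Sr 1)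
  have hψ : ∀ (c : ℝ) x, S 1 ((c : ℂ) • x) = (c : ℂ) • S 1 x := fun c x => by
    have := map_real_smul ψ Sc c x
    simpa [ψ] using this
  let Φ : A →L[ℂ] G :=
    { toFun := S 1
      map_add' := Sr 1
      map_smul' := fun c x => by
        simp only [RingHom.id_apply]
        conv_lhs => rw [← Complex.re_add_im c]
        conv_rhs => rw [← Complex.re_add_im c]
        rw [add_smul, Sr, hψ, mul_smul, hψ, SI, add_smul, mul_smul]
      cont := Sc }
  have hfT : ∀ x, f x = T x + Q x := fun x => by
    simp only [hT, hQ]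
    rw [← smul_add, sub_add_add_cancel, ← two_smul ℂ, smul_smul]; norm_num
  refine ⟨T, hTc, hTadd, Φ, fun x => ?_, fun Ψ hΨ => ?_⟩
  · rw [hfT, SQ]; rfl
  · have hD : ∀ x, (Ψ - Φ) (star x * x) = 0 := fun x => by
      have a := hΨ x
      have b : f x = T x + Φ (star x * x) := by rw [hfT, SQ]; rfl
      rw [a] at b
      simpa [sub_eq_zero] using b
    rw [← sub_eq_zero]
    set D := Ψ - Φ
    have h1 : ∀ y, D y + D (star y) = 0 := fun y => by
      have a := hD (1 + y)
      have b := hD y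
      have c := hD 1
      have e : star (1 + y) * (1 + y) = star (1:A) * 1 + y + star y + star y * y := by
        simp only [star_add, star_one]; noncomm_ring
      rw [e, map_add, map_add, map_add, b, c] at a
      simpa using a
    ext y
    have a := h1 y
    have b := h1 (Complex.I • y)
    rw [star_smul, map_smul, map_smul] at b
    have b' : D y - D (star y) = 0 := by
      have : Complex.I • (D y - D (star y)) = 0 := by
        rw [smul_sub, ← b]; simp [sub_eq_add_neg]
      exact (smul_eq_zero.mp this).resolve_left Complex.I_ne_zero
    apply two_cancel
    simp only [zero_apply, add_zero]
    linear_combination (norm := module) a + b'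
end alg
section hilb
open scoped InnerProductSpace
variable {H : Type*} [NormedAddCommGroup H] [InnerProductSpace ℂ H] [CompleteSpace H]


theorem exists_iso {J : Type*} (v : J → H) (hv : Orthonormal ℂ v) :
    ∃ V : lp (fun _ : J => ℂ) 2 →L[ℂ] H, (ContinuousLinearMap.adjoint V) ∘L V = 1 ∧
      (∀ j, ∃ s, V s = v j) ∧ ∀ h, (∀ j, ⟪v j, h⟫_ℂ = 0) → ContinuousLinearMap.adjoint V h = 0 := by
  classical
  let V := hv.orthogonalFamily.linearIsometry
  have hs : ∀ j, V (lp.single 2 j (1 : ℂ)) = v j := fun j => by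
    simp [V, OrthogonalFamily.linearIsometry_apply_single]
  refine ⟨V.toContinuousLinearMap, ?_, fun j => ⟨lp.single 2 j 1, hs j⟩, fun h hh => ?_⟩
  · ext1 x
    refine ext_inner_left ℂ fun y => ?_
    simp
  · ext j
    have := lp.inner_single_left (𝕜 := ℂ) j (1 : ℂ)
      (ContinuousLinearMap.adjoint V.toContinuousLinearMap h)
    rw [ContinuousLinearMap.adjoint_inner_right] at this
    simp only [LinearIsometry.coe_toContinuousLinearMap, hs, hh] at this
    simpa using this.symm

theorem iso_perp {J K : Type*} {v : J → H} {w : K → H}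
    {V : lp (fun _ : J => ℂ) 2 →L[ℂ] H} {W : lp (fun _ : K => ℂ) 2 →L[ℂ] H}
    (h1 : ∀ h, (∀ j, ⟪v j, h⟫_ℂ = 0) → ContinuousLinearMap.adjoint V h = 0)
    (h2 : ∀ h, (∀ j, ⟪w j, h⟫_ℂ = 0) → ContinuousLinearMap.adjoint W h = 0)
    (hvw : ∀ j k, ⟪v j, w k⟫_ℂ = 0) (x) : ContinuousLinearMap.adjoint V (W x) = 0 := by
  apply h1
  intro j
  rw [← ContinuousLinearMap.adjoint_inner_left, h2, inner_zero_left]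
  intro k
  rw [← inner_conj_symm, hvw, map_zero]

theorem good_of {J : Type*} {V W : lp (fun _ : J => ℂ) 2 →L[ℂ] H}
    (hV : (ContinuousLinearMap.adjoint V) ∘L V = 1)
    (hW : (ContinuousLinearMap.adjoint W) ∘L W = 1)
    (hVW : ∀ x, ContinuousLinearMap.adjoint V (W x) = 0) :
    Gd (V ∘L ContinuousLinearMap.adjoint V) := by
  have hV' : ∀ x, ContinuousLinearMap.adjoint V (V x) = x := fun x => by
    simpa using DFunLike.congr_fun hV x
  have hW' : ∀ x, ContinuousLinearMap.adjoint W (W x) = x := fun x => by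
    simpa using DFunLike.congr_fun hW x
  refine ⟨?_, ?_, W ∘L ContinuousLinearMap.adjoint V, ?_, ?_⟩
  · rw [ContinuousLinearMap.star_eq_adjoint, ContinuousLinearMap.adjoint_comp,
      ContinuousLinearMap.adjoint_adjoint]
  · ext x; simp [hV']
  · rw [ContinuousLinearMap.star_eq_adjoint, ContinuousLinearMap.adjoint_comp,
      ContinuousLinearMap.adjoint_adjoint]
    ext x; simp [hW']
  · ext x; simp [hVW]

theorem exists_of_equiv {ι A C : Type*} (b : HilbertBasis ι ℂ H) (e : (A ⊕ A) ⊕ C ≃ ι)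
    (j : C → A) (hj : Function.Injective j) :
    ∃ p q r : H →L[ℂ] H, Gd p ∧ Gd q ∧ Gd r ∧ p + q + r = 1 ∧ p * q = 0 ∧ p * r = 0 ∧
      q * r = 0 := by
  have hb := b.orthonormal
  have ho : ∀ {s t}, s ≠ t → ⟪b (e s), b (e t)⟫_ℂ = 0 := fun h => hb.2 (e.injective.ne h)
  let v1 : A → H := fun a => b (e (.inl (.inl a)))
  let v2 : A → H := fun a => b (e (.inl (.inr a)))
  let v3 : C → H := fun c => b (e (.inr c))
  let v4 : C → H := fun c => b (e (.inl (.inl (j c))))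
  obtain ⟨V1, a1, s1, z1⟩ := exists_iso v1 (hb.comp _ fun x y h => by simpa using h)
  obtain ⟨V2, a2, s2, z2⟩ := exists_iso v2 (hb.comp _ fun x y h => by simpa using h)
  obtain ⟨V3, a3, s3, z3⟩ := exists_iso v3 (hb.comp _ fun x y h => by simpa using h)
  obtain ⟨V4, a4, s4, z4⟩ := exists_iso v4 (hb.comp _ fun x y h => by simpa [hj.eq_iff] using h)
  have p12 := iso_perp z1 z2 fun x y => ho (by simp)
  have p21 := iso_perp z2 z1 fun x y => ho (by simp)
  have p13 := iso_perp z1 z3 fun x y => ho (by simp)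
  have p31 := iso_perp z3 z1 fun x y => ho (by simp)
  have p23 := iso_perp z2 z3 fun x y => ho (by simp)
  have p32 := iso_perp z3 z2 fun x y => ho (by simp)
  have p34 := iso_perp z3 z4 fun x y => ho (by simp)
  have i1 : ∀ x, ContinuousLinearMap.adjoint V1 (V1 x) = x := fun x => by
    simpa using DFunLike.congr_fun a1 x
  have i2 : ∀ x, ContinuousLinearMap.adjoint V2 (V2 x) = x := fun x => by
    simpa using DFunLike.congr_fun a2 x
  have i3 : ∀ x, ContinuousLinearMap.adjoint V3 (V3 x) = x := fun x => by
    simpa using DFunLike.congr_fun a3 x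
  refine ⟨_, _, _, good_of a1 a2 p12, good_of a2 a1 p21, good_of a3 a4 p34, ?_, ?_, ?_, ?_⟩
  · have hd : Dense (Submodule.span ℂ (Set.range b) : Set H) :=
      Submodule.dense_iff_topologicalClosure_eq_top.mpr b.dense_span
    refine ContinuousLinearMap.ext_on hd ?_
    rintro _ ⟨i, rfl⟩
    obtain ⟨t, rfl⟩ := e.surjective i
    rcases t with (a | a) | c
    · obtain ⟨s, hs⟩ := s1 a
      change _ = b _ at hs
      rw [← hs]; simp [i1, p21, p31]
    · obtain ⟨s, hs⟩ := s2 a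
      change _ = b _ at hs
      rw [← hs]; simp [i2, p12, p32]
    · obtain ⟨s, hs⟩ := s3 c
      change _ = b _ at hs
      rw [← hs]; simp [i3, p13, p23]
  · ext x; simp [p12]
  · ext x; simp [p13]
  · ext x; simp [p23]

theorem exists_pqr (hdim : 2 ≤ Module.rank ℂ H) :
    ∃ p q r : H →L[ℂ] H, Gd p ∧ Gd q ∧ Gd r ∧ p + q + r = 1 ∧ p * q = 0 ∧ p * r = 0 ∧
      q * r = 0 := by
  obtain ⟨ι, b, -⟩ := exists_hilbertBasis ℂ H
  rcases finite_or_infinite ι with hfin | hinf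
  · have := Fintype.ofFinite ι
    set n := Fintype.card ι with hn
    have hcard : 2 ≤ n := by
      have hspan : Submodule.span ℂ (Set.range b) = ⊤ := by
        have : FiniteDimensional ℂ (Submodule.span ℂ (Set.range b)) :=
          FiniteDimensional.span_of_finite ℂ (Set.finite_range b)
        rw [← b.dense_span]
        exact ((Submodule.closed_of_finiteDimensional _).submodule_topologicalClosure_eq).symm
      have h1 := rank_span_le (R := ℂ) (Set.range b)
      rw [hspan, rank_top] at h1
      have h2 : Cardinal.mk (Set.range b) ≤ n := by
        refine Cardinal.mk_range_le.trans ?_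
        simp [hn]
      exact_mod_cast hdim.trans (h1.trans h2)
    have e : (Fin (n / 2) ⊕ Fin (n / 2)) ⊕ Fin (n % 2) ≃ ι :=
      Fintype.equivOfCardEq (by simp only [Fintype.card_sum, Fintype.card_fin]; omega)
    exact exists_of_equiv b e (Fin.castLE (by omega)) (Fin.castLE_injective _)
  · have e : Nonempty ((ι ⊕ ι) ⊕ Empty ≃ ι) := by
      rw [← Cardinal.eq]
      simp [Cardinal.add_eq_self (Cardinal.aleph0_le_mk ι)]
    obtain ⟨e⟩ := e
    exact exists_of_equiv b e (fun c => c.elim) (fun c => c.elim)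
end hilb

/-- Proposition 6.1, second part.
Let `H` be a complex Hilbert space with `dim H ≥ 2` and `G` a complex Banach space.  If
`f : B(H) → G` is continuous and satisfies `x* ⬝ y = 0 → f(x+y) = f(x) + f(y)`, then
there are a continuous additive `T : B(H) → G` and a unique continuous linear
`Φ : B(H) → G` such that `f(x) = T(x) + Φ(x* ⬝ x)` for all `x ∈ B(H)`. -/
theorem continuous_orthogonally_additive_representation_boundedOperators
    {H : Type*} [NormedAddCommGroup H] [InnerProductSpace ℂ H] [CompleteSpace H]
    (hdim : 2 ≤ Module.rank ℂ H)
    {G : Type*} [NormedAddCommGroup G] [NormedSpace ℂ G] [CompleteSpace G]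
    (f : (H →L[ℂ] H) → G) (hfc : Continuous f)
    (hf : ∀ x y : H →L[ℂ] H, star x * y = 0 → f (x + y) = f x + f y) :
    ∃ T : (H →L[ℂ] H) → G, Continuous T ∧ (∀ x y : H →L[ℂ] H, T (x + y) = T x + T y) ∧
      ∃! Φ : (H →L[ℂ] H) →L[ℂ] G, ∀ x : H →L[ℂ] H, f x = T x + Φ (star x * x) := by
  obtain ⟨p, q, r, hp, hq, hr, hs, hpq, hpr, hqr⟩ := exists_pqr hdim
  exact main_alg f hfc hf hp hq hr hs hpq hpr hqr
end
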